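/- Let ℓ > 0, let m be a nonzero integer, let ε ∈ {+1, −1}, and let s be a complex number with Re(s) > 1/2. Then (2s−1) ∫₁^{e^ℓ} ∫₀^∞ g_s( ((1 − ε e^{mℓ})² x² + (1 + e^{mℓ})² y²)/(4 e^{mℓ} y²) ) y^{-2} dx dy = (ℓ/2) · e^{−s|m|ℓ}/(1 − ε e^{−|m|ℓ}). -/

import Mathlib

open MeasureTheory

/-- The Green's function of the resolvent `(Δ_ℍ - s(1-s))⁻¹` on the hyperbolic plane,
expressed in the point-pair invariant `σ = cosh²(d(z,z')/2)`, via Euler's integral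
representation: `g_s(σ) = (1/(4π)) ∫₀¹ t^(s-1) (1-t)^(s-1) (σ-t)^(-s) dt`. -/
noncomputable def greenH (s : ℂ) (σ : ℝ) : ℂ :=
  (1 / (4 * (Real.pi : ℂ))) * ∫ t in Set.Ioo (0:ℝ) 1,
    (t : ℂ) ^ (s - 1) * ((1 : ℂ) - (t : ℂ)) ^ (s - 1) * ((σ : ℂ) - (t : ℂ)) ^ (-s)

/-
Write `σ = cosh² (L / 2) + (c x / y)²` for the argument of the Green's function. The substitution
`v = c x / y` decouples the strip, whose contribution is `ℓ / c`, and leaves `∫ g_s (p² + v²) dv`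
with `p = cosh (L / 2)`. After Fubini the `v`-integral is a beta integral, and there remains
`∫ t^(s-1) (1-t)^(s-1) (p² - t)^(1/2-s) dt`. With `q = sinh (L / 2)`, the substitution
`t = 1 / (1 + w²)` gives
  `p² - t = w² ((p + q)² + (p w - q / w)²) / (1 + w²)²`,
so the integrand becomes the Cauchy weight `1 / (1 + w²)` times an even function of Boole's map
`p w - q / w`. Boole's map transports this weight to the Cauchy weight of width `p + q`, so a second
beta integral results; the Gamma factors cancel and `(p + q)² = e^|L|` produces the exponential.
-/

open Set

variable {E : Type*} [NormedAddCommGroup E] [NormedSpace ℝ E]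

lemma image_inv_one_add_sq_Ioi : (fun w : ℝ ↦ (1 + w ^ 2)⁻¹) '' Ioi 0 = Ioo 0 1 := by
  ext t
  constructor
  · rintro ⟨w, hw : 0 < w, rfl⟩
    exact ⟨by positivity, inv_lt_one_of_one_lt₀ (by nlinarith)⟩
  · rintro ⟨ht₀, ht₁⟩
    have ht : 0 < t⁻¹ - 1 := sub_pos.mpr ((one_lt_inv₀ ht₀).mpr ht₁)
    exact ⟨√(t⁻¹ - 1), Real.sqrt_pos.mpr ht, by simp [Real.sq_sqrt ht.le]⟩

lemma antitoneOn_inv_one_add_sq : AntitoneOn (fun w : ℝ ↦ (1 + w ^ 2)⁻¹) (Ioi 0) := by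
  intro v (hv : 0 < v) w _ hvw
  dsimp only
  gcongr

lemma hasDerivAt_inv_one_add_sq (w : ℝ) :
    HasDerivAt (fun w : ℝ ↦ (1 + w ^ 2)⁻¹) (-(2 * w) / (1 + w ^ 2) ^ 2) w := by
  simpa using ((hasDerivAt_pow 2 w).const_add 1).fun_inv (by positivity)

lemma integral_Ioo_zero_one_eq_integral_Ioi (f : ℝ → E) :
    ∫ t in Ioo (0 : ℝ) 1, f t =
      ∫ w in Ioi (0 : ℝ), (2 * w / (1 + w ^ 2) ^ 2) • f (1 + w ^ 2)⁻¹ := by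
  rw [← image_inv_one_add_sq_Ioi, integral_image_eq_integral_deriv_smul_of_antitoneOn
    measurableSet_Ioi (fun w _ ↦ (hasDerivAt_inv_one_add_sq w).hasDerivWithinAt)
    antitoneOn_inv_one_add_sq]
  simp only [neg_div, neg_neg]

lemma ofReal_inv_cpow {x : ℝ} (hx : 0 < x) (z : ℂ) : ((x⁻¹ : ℝ) : ℂ) ^ z = (x : ℂ) ^ (-z) := by
  rw [Complex.ofReal_inv, Complex.inv_cpow _ _ (by simp [Complex.arg_ofReal_of_nonneg hx.le,
    Real.pi_ne_zero.symm]), Complex.cpow_neg]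

lemma ofReal_mul_sq_cpow {x : ℝ} (hx : 0 < x) (z : ℂ) :
    (x : ℂ) * ((x ^ 2 : ℝ) : ℂ) ^ z = ((x ^ 2 : ℝ) : ℂ) ^ (z + 1 / 2) := by
  rw [Complex.cpow_add _ _ (by exact_mod_cast (pow_pos hx 2).ne'), Complex.ofReal_pow, one_div,
    Complex.sq_cpow_two_inv (by simpa), mul_comm]

lemma integral_Ioo_cpow_mul_one_sub_cpow_mul (a b : ℂ) (f : ℝ → ℂ) :
    ∫ t in Ioo (0 : ℝ) 1, (t : ℂ) ^ (a - 1) * (1 - (t : ℂ)) ^ (b - 1) * f t =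
      2 * ∫ w in Ioi (0 : ℝ),
        ((w ^ 2 : ℝ) : ℂ) ^ (b - 1 / 2) * ((1 + w ^ 2 : ℝ) : ℂ) ^ (-(a + b)) *
          f (1 + w ^ 2)⁻¹ := by
  rw [integral_Ioo_zero_one_eq_integral_Ioi, ← integral_const_mul]
  refine setIntegral_congr_fun measurableSet_Ioi fun w (hw : 0 < w) ↦ ?_
  have hpos : 0 < 1 + w ^ 2 := by positivity
  have hne : ((1 + w ^ 2 : ℝ) : ℂ) ≠ 0 := by exact_mod_cast hpos.ne'
  have hcompl : 1 - (((1 + w ^ 2)⁻¹ : ℝ) : ℂ) = (w ^ 2 : ℝ) * ((1 + w ^ 2)⁻¹ : ℝ) := by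
    norm_cast
    field_simp
    ring
  have hexp : -(a + b) = -(a - 1) + -(b - 1) + -2 := by ring
  rw [hcompl, Complex.mul_cpow_ofReal_nonneg (by positivity) (by positivity), ofReal_inv_cpow hpos,
    ofReal_inv_cpow hpos, show b - 1 / 2 = b - 1 + 1 / 2 by ring, ← ofReal_mul_sq_cpow hw, hexp,
    Complex.cpow_add _ _ hne, Complex.cpow_add _ _ hne, Complex.cpow_neg _ 2,
    Complex.cpow_ofNat, Complex.real_smul, Complex.ofReal_div, Complex.ofReal_mul,
    Complex.ofReal_pow (1 + w ^ 2) 2, Complex.ofReal_ofNat]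
  ring

lemma integral_Ioi_one_add_sq_cpow {s : ℂ} (hs : 1 / 2 < s.re) :
    ∫ w in Ioi (0 : ℝ), ((1 + w ^ 2 : ℝ) : ℂ) ^ (-s) =
      Complex.Gamma (s - 1 / 2) * Complex.Gamma (1 / 2) / (2 * Complex.Gamma s) := by
  have hbeta := Complex.betaIntegral_eq_Gamma_mul_div (s - 1 / 2) (1 / 2)
    (by simpa using hs) (by norm_num)
  have hsubst := integral_Ioo_cpow_mul_one_sub_cpow_mul (s - 1 / 2) (1 / 2) fun _ ↦ 1
  simp only [sub_self, Complex.cpow_zero, one_mul, mul_one, sub_add_cancel] at hsubst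
  rw [sub_add_cancel, Complex.betaIntegral, intervalIntegral.integral_of_le zero_le_one,
    integral_Ioc_eq_integral_Ioo, hsubst] at hbeta
  rw [mul_comm 2 (Complex.Gamma s), ← div_div, ← hbeta, mul_div_cancel_left₀ _ two_ne_zero]

lemma integral_Ioi_sq_add_cpow {s : ℂ} (hs : 1 / 2 < s.re) {b : ℝ} (hb : 0 < b) :
    ∫ v in Ioi (0 : ℝ), ((b + v ^ 2 : ℝ) : ℂ) ^ (-s) = (b : ℂ) ^ (1 / 2 - s) *
      (Complex.Gamma (s - 1 / 2) * Complex.Gamma (1 / 2) / (2 * Complex.Gamma s)) := by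
  have hsqrt : 0 < √b := Real.sqrt_pos.mpr hb
  have hb' : (b : ℂ) ≠ 0 := by exact_mod_cast hb.ne'
  have hscale : ∀ w : ℝ, ((b + (√b * w) ^ 2 : ℝ) : ℂ) ^ (-s) =
      (b : ℂ) ^ (-s) * ((1 + w ^ 2 : ℝ) : ℂ) ^ (-s) := fun w ↦ by
    rw [← Complex.mul_cpow_ofReal_nonneg hb.le (by positivity), ← Complex.ofReal_mul, mul_pow,
      Real.sq_sqrt hb.le, mul_one_add]
  have hroot : (√b : ℂ) = (b : ℂ) ^ (1 / 2 : ℂ) := by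
    rw [Real.sqrt_eq_rpow, Complex.ofReal_cpow hb.le]
    norm_num
  rw [← mul_zero √b, ← integral_comp_mul_left_Ioi' (fun v : ℝ ↦ ((b + v ^ 2 : ℝ) : ℂ) ^ (-s)) 0
    hsqrt]
  simp only [hscale]
  rw [integral_const_mul, integral_Ioi_one_add_sq_cpow hs, Complex.real_smul, hroot, ← mul_assoc,
    ← Complex.cpow_add _ _ hb', ← sub_eq_add_neg]

lemma integrable_add_sq_rpow_neg {b r : ℝ} (hb : 0 < b) (hr : 1 / 2 < r) :
    Integrable fun v : ℝ ↦ (b + v ^ 2) ^ (-r) := by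
  have h : Integrable fun x : ℝ ↦ ((1 : ℝ) + ‖x‖ ^ 2) ^ (-(2 * r) / 2) :=
    integrable_rpow_neg_one_add_norm_sq (by simp; linarith)
  refine ((h.comp_div (Real.sqrt_pos.mpr hb).ne').const_mul (b ^ (-r))).congr
    (ae_of_all _ fun v ↦ ?_)
  dsimp only
  rw [show -(2 * r) / 2 = -r by ring, ← Real.mul_rpow hb.le (by positivity), Real.norm_eq_abs,
    sq_abs, div_pow, Real.sq_sqrt hb.le, mul_one_add, mul_div_cancel₀ _ hb.ne']

lemma image_const_div_Ioi_of_pos {a c : ℝ} (ha : 0 < a) (hc : 0 < c) :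
    (fun x ↦ c / x) '' Ioi a = Ioo 0 (c / a) := by
  ext y
  constructor
  · rintro ⟨x, hx : a < x, rfl⟩
    exact ⟨div_pos hc (ha.trans hx), by dsimp only; gcongr⟩
  · rintro ⟨hy₀, hy⟩
    exact ⟨c / y, (lt_div_comm₀ hy₀ ha).mp hy, div_div_cancel₀ hc.ne'⟩

lemma hasDerivAt_const_div (c : ℝ) {x : ℝ} (hx : x ≠ 0) :
    HasDerivAt (fun x ↦ c / x) (-(c / x ^ 2)) x :=
  ((hasDerivAt_inv hx).const_mul c).congr_deriv (by ring)

lemma antitoneOn_const_div {a c : ℝ} (ha : 0 < a) (hc : 0 < c) :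
    AntitoneOn (fun x ↦ c / x) (Ioi a) := by
  intro x (hx : a < x) y _ hxy
  have : 0 < x := ha.trans hx
  dsimp only
  gcongr

lemma integral_Ioo_eq_integral_Ioi_const_div {a c : ℝ} (ha : 0 < a) (hc : 0 < c) (f : ℝ → E) :
    ∫ x in Ioo 0 (c / a), f x = ∫ x in Ioi a, (c / x ^ 2) • f (c / x) := by
  rw [← image_const_div_Ioi_of_pos ha hc, integral_image_eq_integral_deriv_smul_of_antitoneOn
    measurableSet_Ioi (fun x hx ↦ (hasDerivAt_const_div c (ha.trans hx).ne').hasDerivWithinAt)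
    (antitoneOn_const_div ha hc)]
  simp only [neg_neg]

lemma integrableOn_Ioo_iff_integrableOn_Ioi_const_div {a c : ℝ} (ha : 0 < a) (hc : 0 < c)
    (f : ℝ → E) :
    IntegrableOn f (Ioo 0 (c / a)) ↔ IntegrableOn (fun x ↦ (c / x ^ 2) • f (c / x)) (Ioi a) := by
  rw [← image_const_div_Ioi_of_pos ha hc,
    integrableOn_image_iff_integrableOn_deriv_smul_of_antitoneOn measurableSet_Ioi
    (fun x hx ↦ (hasDerivAt_const_div c (ha.trans hx).ne').hasDerivWithinAt)
    (antitoneOn_const_div ha hc)]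
  simp only [neg_neg]

/-- Boole's map `w ↦ p w - q / w`, for `p, q > 0` an increasing bijection of `(0, ∞)` onto `ℝ` under
which Cauchy weights pull back to Cauchy weights. It is used with `p = cosh (L / 2)` and
`q = sinh (L / 2)`; the value at `w = 0` is irrelevant. -/
noncomputable def booleMap (p q w : ℝ) : ℝ := p * w - q / w

section BooleMap

variable {p q : ℝ}

lemma hasDerivAt_booleMap (p q : ℝ) {w : ℝ} (hw : w ≠ 0) :
    HasDerivAt (booleMap p q) (p + q / w ^ 2) w :=
  (((hasDerivAt_id w).const_mul p).sub ((hasDerivAt_inv hw).const_mul q)).congr_deriv (by ring)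

lemma booleMap_const_div (hp : p ≠ 0) (hq : q ≠ 0) (w : ℝ) :
    booleMap p q (q / p / w) = -booleMap p q w := by
  rcases eq_or_ne w 0 with rfl | hw
  · simp [booleMap]
  · unfold booleMap
    field_simp
    ring

lemma sq_add_booleMap_sq (p q : ℝ) {w : ℝ} (hw : w ≠ 0) :
    (p + q) ^ 2 + booleMap p q w ^ 2 = (1 + w ^ 2) * (p ^ 2 * w ^ 2 + q ^ 2) / w ^ 2 := by
  unfold booleMap
  field_simp
  ring

lemma strictMonoOn_booleMap (hp : 0 < p) (hq : 0 < q) :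
    StrictMonoOn (booleMap p q) (Ioi 0) := by
  intro v (hv : 0 < v) w _ hvw
  unfold booleMap
  gcongr

lemma image_booleMap_Ioi (hp : 0 < p) (hq : 0 < q) :
    booleMap p q '' Ioi √(q / p) = Ioi 0 := by
  have hr : 0 < √(q / p) := Real.sqrt_pos.mpr (by positivity)
  have hzero : booleMap p q √(q / p) = 0 := by
    have := Real.sq_sqrt (by positivity : 0 ≤ q / p)
    have h := booleMap_const_div hp.ne' hq.ne' √(q / p)
    rw [Real.div_sqrt] at h
    linarith
  have hsub : Ici √(q / p) ⊆ Ioi 0 := Ici_subset_Ioi.mpr hr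
  have htop : Filter.Tendsto (booleMap p q) Filter.atTop Filter.atTop :=
    (Filter.tendsto_id.const_mul_atTop hp).atTop_add
      (Filter.tendsto_id.const_div_atTop q).neg
  rw [← hzero]
  exact ContinuousOn.image_Ioi_of_strictMonoOn
    (fun w hw ↦ (hasDerivAt_booleMap p q (hsub hw).ne').continuousAt.continuousWithinAt)
    ((strictMonoOn_booleMap hp hq).mono hsub) htop

lemma cauchy_weight_add_reflected (hp : 0 < p) (hq : 0 < q) {w : ℝ} (hw : 0 < w) :
    q / p / w ^ 2 * (1 + (q / p / w) ^ 2)⁻¹ + (1 + w ^ 2)⁻¹ =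
      (p + q / w ^ 2) * ((p + q) / ((p + q) ^ 2 + booleMap p q w ^ 2)) := by
  rw [sq_add_booleMap_sq p q hw.ne']
  field_simp
  ring

-- The reflection `w ↦ (q / p) / w` fixes `√(q / p)` and negates Boole's map, so it folds
-- `(0, ∞)` onto `(√(q / p), ∞)`, where Boole's map is a bijection onto `(0, ∞)`.
theorem integral_comp_booleMap (hp : 0 < p) (hq : 0 < q) {G : ℝ → E} (hG : G.Even)
    (hint : IntegrableOn (fun w ↦ (1 + w ^ 2)⁻¹ • G (booleMap p q w)) (Ioi 0)) :
    ∫ w in Ioi (0 : ℝ), (1 + w ^ 2)⁻¹ • G (booleMap p q w) =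
      ∫ y in Ioi (0 : ℝ), ((p + q) / ((p + q) ^ 2 + y ^ 2)) • G y := by
  set h : ℝ → E := fun w ↦ (1 + w ^ 2)⁻¹ • G (booleMap p q w) with hdef
  set r := √(q / p)
  have hr₀ : 0 < r := Real.sqrt_pos.mpr (by positivity)
  have hsub : Ioi r ⊆ Ioi 0 := Ioi_subset_Ioi hr₀.le
  have hfix : q / p / r = r := Real.div_sqrt
  have hIoo : IntegrableOn h (Ioo 0 r) := hint.mono_set Ioo_subset_Ioi_self
  have hIoi : IntegrableOn h (Ioi r) := hint.mono_set hsub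
  have hreflect : IntegrableOn (fun w ↦ (q / p / w ^ 2) • h (q / p / w)) (Ioi r) := by
    rwa [← integrableOn_Ioo_iff_integrableOn_Ioi_const_div hr₀ (by positivity), hfix]
  calc ∫ w in Ioi 0, h w
      = (∫ w in Ioo 0 r, h w) + ∫ w in Ioi r, h w := by
        rw [← integral_Ioc_eq_integral_Ioo, ← setIntegral_union
          (Ioc_disjoint_Ioi le_rfl) measurableSet_Ioi
          (hint.mono_set Ioc_subset_Ioi_self) hIoi, Ioc_union_Ioi_eq_Ioi hr₀.le]
    _ = ∫ w in Ioi r, ((q / p / w ^ 2) • h (q / p / w) + h w) := by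
        rw [integral_add hreflect hIoi,
          ← integral_Ioo_eq_integral_Ioi_const_div hr₀ (by positivity), hfix]
    _ = ∫ w in Ioi r, (p + q / w ^ 2) •
          (((p + q) / ((p + q) ^ 2 + booleMap p q w ^ 2)) • G (booleMap p q w)) := by
        refine setIntegral_congr_fun measurableSet_Ioi fun w hw ↦ ?_
        simp only [hdef, booleMap_const_div hp.ne' hq.ne', hG _, smul_smul, ← add_smul,
          cauchy_weight_add_reflected hp hq (hsub hw)]
    _ = ∫ y in Ioi 0, ((p + q) / ((p + q) ^ 2 + y ^ 2)) • G y := by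
        rw [← image_booleMap_Ioi hp hq, integral_image_eq_integral_deriv_smul_of_monotoneOn
          measurableSet_Ioi
          (fun w hw ↦ (hasDerivAt_booleMap p q (hsub hw).ne').hasDerivWithinAt)
          ((strictMonoOn_booleMap hp hq).mono hsub).monotoneOn]

end BooleMap

lemma norm_cpow_le_of_le {x y : ℝ} {z : ℂ} (hx : 0 < x) (hxy : x ≤ y) (hz : z.re ≤ 0) :
    ‖(y : ℂ) ^ z‖ ≤ x ^ z.re := by
  rw [Complex.norm_cpow_eq_rpow_re_of_pos (hx.trans_le hxy)]
  exact Real.rpow_le_rpow_of_nonpos hx hxy hz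

section Kernel

variable {p q : ℝ} {s : ℂ}

lemma integrableOn_inv_one_add_sq_smul_booleMap_cpow (hpq : 0 < p + q) (hs : 1 / 2 < s.re) :
    IntegrableOn (fun w ↦ (1 + w ^ 2)⁻¹ •
      (((p + q) ^ 2 + booleMap p q w ^ 2 : ℝ) : ℂ) ^ (1 / 2 - s)) (Ioi 0) := by
  have hmeas : Measurable fun w ↦ (1 + w ^ 2)⁻¹ •
      (((p + q) ^ 2 + booleMap p q w ^ 2 : ℝ) : ℂ) ^ (1 / 2 - s) := by
    unfold booleMap
    fun_prop
  refine (integrable_inv_one_add_sq.mul_const (((p + q) ^ 2) ^ (1 / 2 - s).re)).integrableOn.mono'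
    hmeas.aestronglyMeasurable (ae_of_all _ fun w ↦ ?_)
  rw [norm_smul, Real.norm_of_nonneg (by positivity)]
  gcongr
  exact norm_cpow_le_of_le (by positivity) (le_add_of_nonneg_right (sq_nonneg _))
    (by simp; linarith)

lemma sq_sub_inv_one_add_sq (h : p ^ 2 = 1 + q ^ 2) {w : ℝ} (hw : w ≠ 0) :
    p ^ 2 - (1 + w ^ 2)⁻¹ =
      w ^ 2 * ((1 + w ^ 2)⁻¹ * ((1 + w ^ 2)⁻¹ * ((p + q) ^ 2 + booleMap p q w ^ 2))) := by
  have : 1 + w ^ 2 ≠ 0 := by positivity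
  rw [sq_add_booleMap_sq p q hw]
  field_simp
  linear_combination h

lemma integral_Ioo_cpow_mul_sq_sub_cpow_eq_integral_booleMap (hpq : 0 < p + q)
    (h : p ^ 2 = 1 + q ^ 2) :
    ∫ t in Ioo (0 : ℝ) 1, (t : ℂ) ^ (s - 1) * (1 - (t : ℂ)) ^ (s - 1) *
        ((p ^ 2 - t : ℝ) : ℂ) ^ (1 / 2 - s) =
      2 * ∫ w in Ioi (0 : ℝ), (1 + w ^ 2)⁻¹ •
        (((p + q) ^ 2 + booleMap p q w ^ 2 : ℝ) : ℂ) ^ (1 / 2 - s) := by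
  rw [integral_Ioo_cpow_mul_one_sub_cpow_mul]
  congr 1
  refine setIntegral_congr_fun measurableSet_Ioi fun w (hw : 0 < w) ↦ ?_
  have hpos : 0 < 1 + w ^ 2 := by positivity
  have hX : ((1 + w ^ 2 : ℝ) : ℂ) ≠ 0 := by exact_mod_cast hpos.ne'
  have hW : ((w ^ 2 : ℝ) : ℂ) ≠ 0 := by exact_mod_cast (pow_pos hw 2).ne'
  have hW0 : ((w ^ 2 : ℝ) : ℂ) ^ (s - 1 / 2) * ((w ^ 2 : ℝ) : ℂ) ^ (1 / 2 - s) = 1 := by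
    rw [← Complex.cpow_add _ _ hW, sub_add_sub_cancel, sub_self, Complex.cpow_zero]
  have hX1 : ((1 + w ^ 2 : ℝ) : ℂ) ^ (-(s + s)) *
      (((1 + w ^ 2 : ℝ) : ℂ) ^ (-(1 / 2 - s)) * ((1 + w ^ 2 : ℝ) : ℂ) ^ (-(1 / 2 - s))) =
      ((1 + w ^ 2 : ℝ) : ℂ)⁻¹ := by
    rw [← Complex.cpow_add _ _ hX, ← Complex.cpow_add _ _ hX, ← Complex.cpow_neg_one]
    ring_nf
  rw [sq_sub_inv_one_add_sq h hw.ne', Complex.ofReal_mul,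
    Complex.mul_cpow_ofReal_nonneg (by positivity) (by positivity), Complex.ofReal_mul,
    Complex.mul_cpow_ofReal_nonneg (by positivity) (by positivity), Complex.ofReal_mul,
    Complex.mul_cpow_ofReal_nonneg (by positivity) (by positivity), ofReal_inv_cpow hpos,
    Complex.real_smul, Complex.ofReal_inv, ← hX1]
  linear_combination ((1 + w ^ 2 : ℝ) : ℂ) ^ (-(s + s)) *
    (((1 + w ^ 2 : ℝ) : ℂ) ^ (-(1 / 2 - s)) * ((1 + w ^ 2 : ℝ) : ℂ) ^ (-(1 / 2 - s))) *
    (((p + q) ^ 2 + booleMap p q w ^ 2 : ℝ) : ℂ) ^ (1 / 2 - s) * hW0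

lemma integral_Ioo_cpow_mul_sq_sub_cpow (hp : 0 < p) (hq : 0 < q) (h : p ^ 2 = 1 + q ^ 2)
    (hs : 1 / 2 < s.re) :
    ∫ t in Ioo (0 : ℝ) 1, (t : ℂ) ^ (s - 1) * (1 - (t : ℂ)) ^ (s - 1) *
        ((p ^ 2 - t : ℝ) : ℂ) ^ (1 / 2 - s) =
      (((p + q) ^ 2 : ℝ) : ℂ) ^ (1 / 2 - s) *
        (Complex.Gamma s * Complex.Gamma (1 / 2) / Complex.Gamma (s + 1 / 2)) := by
  have hpq : 0 < p + q := add_pos hp hq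
  have hmerge (y : ℝ) : ((p + q) / ((p + q) ^ 2 + y ^ 2)) •
      (((p + q) ^ 2 + y ^ 2 : ℝ) : ℂ) ^ (1 / 2 - s) =
      (p + q : ℝ) * (((p + q) ^ 2 + y ^ 2 : ℝ) : ℂ) ^ (-(s + 1 / 2)) := by
    have hne : (((p + q) ^ 2 + y ^ 2 : ℝ) : ℂ) ≠ 0 := by
      exact_mod_cast (by positivity : (p + q) ^ 2 + y ^ 2 ≠ 0)
    rw [show -(s + 1 / 2) = 1 / 2 - s - 1 by ring, Complex.cpow_sub _ 1 hne,
      Complex.cpow_one, Complex.real_smul, Complex.ofReal_div]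
    ring
  rw [integral_Ioo_cpow_mul_sq_sub_cpow_eq_integral_booleMap hpq h, integral_comp_booleMap hp hq
    (G := fun y ↦ (((p + q) ^ 2 + y ^ 2 : ℝ) : ℂ) ^ (1 / 2 - s)) (fun y ↦ by simp only [neg_sq])
    (integrableOn_inv_one_add_sq_smul_booleMap_cpow hpq hs)]
  simp only [hmerge]
  rw [integral_const_mul, integral_Ioi_sq_add_cpow (by simp; linarith) (by positivity),
    ← mul_assoc (Complex.ofReal _), ofReal_mul_sq_cpow hpq, add_sub_cancel_right,
    show 1 / 2 - (s + 1 / 2) + 1 / 2 = 1 / 2 - s by ring]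
  ring

end Kernel

lemma integrable_greenH_kernel {s : ℂ} (hs : 1 / 2 < s.re) {σ : ℝ} (hσ : 1 < σ) :
    Integrable (Function.uncurry fun v t : ℝ ↦ (t : ℂ) ^ (s - 1) * (1 - (t : ℂ)) ^ (s - 1) *
        (((σ + v ^ 2 : ℝ) : ℂ) - t) ^ (-s))
      ((volume.restrict (Ioi 0)).prod (volume.restrict (Ioo 0 1))) := by
  have hbeta := (intervalIntegrable_iff_integrableOn_Ioo_of_le zero_le_one).mp
    (Complex.betaIntegral_convergent (u := s) (v := s) (by linarith) (by linarith))
  have hv : IntegrableOn (fun v : ℝ ↦ (σ - 1 + v ^ 2) ^ (-s.re)) (Ioi 0) :=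
    (integrable_add_sq_rpow_neg (sub_pos.mpr hσ) hs).integrableOn
  refine (hv.mul_prod hbeta.norm).mono' (Measurable.aestronglyMeasurable (by fun_prop)) ?_
  rw [Measure.prod_restrict]
  refine ae_restrict_of_forall_mem (measurableSet_Ioi.prod measurableSet_Ioo) ?_
  rintro ⟨v, t⟩ ⟨-, -, ht : t < 1⟩
  rw [Function.uncurry_apply_pair, norm_mul, mul_comm, ← Complex.ofReal_sub]
  gcongr
  exact norm_cpow_le_of_le (by nlinarith) (by linarith) (by simp; linarith)

lemma two_mul_sub_one_mul_Gamma_quotients {s : ℂ} (hs : 1 / 2 < s.re) :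
    (2 * s - 1) * ((Complex.Gamma (s - 1 / 2) * Complex.Gamma (1 / 2) / (2 * Complex.Gamma s)) *
      (Complex.Gamma s * Complex.Gamma (1 / 2) / Complex.Gamma (s + 1 / 2))) = Real.pi := by
  have hre : 0 < (s - 1 / 2).re := by simpa using hs
  have hne : s - 1 / 2 ≠ 0 := fun h₀ ↦ by rw [h₀] at hre; simp at hre
  have hshift : Complex.Gamma (s + 1 / 2) = (s - 1 / 2) * Complex.Gamma (s - 1 / 2) := by
    rw [← Complex.Gamma_add_one _ hne]
    ring_nf
  have hhalf : Complex.Gamma (1 / 2) ^ 2 = Real.pi := by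
    rw [Complex.Gamma_one_half_eq, sq, ← Complex.cpow_add _ _ (by exact_mod_cast Real.pi_ne_zero)]
    norm_num
  have hΓ₁ := Complex.Gamma_ne_zero_of_re_pos hre
  have hΓ₂ : Complex.Gamma s ≠ 0 := Complex.Gamma_ne_zero_of_re_pos (by linarith)
  rw [hshift, ← hhalf, show 2 * s - 1 = 2 * (s - 1 / 2) by ring]
  generalize s - 1 / 2 = z at hne hΓ₁
  field_simp

lemma integral_greenH_add_sq {p q : ℝ} (hp : 0 < p) (hq : 0 < q) (h : p ^ 2 = 1 + q ^ 2)
    {s : ℂ} (hs : 1 / 2 < s.re) :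
    (2 * s - 1) * ∫ v in Ioi (0 : ℝ), greenH s (p ^ 2 + v ^ 2) =
      1 / 4 * (((p + q) ^ 2 : ℝ) : ℂ) ^ (1 / 2 - s) := by
  have hp1 : 1 < p ^ 2 := by rw [h]; linarith [pow_pos hq 2]
  have hinner : ∀ t ∈ Ioo (0 : ℝ) 1, ∫ v in Ioi (0 : ℝ),
      (t : ℂ) ^ (s - 1) * (1 - (t : ℂ)) ^ (s - 1) * (((p ^ 2 + v ^ 2 : ℝ) : ℂ) - t) ^ (-s) =
      (t : ℂ) ^ (s - 1) * (1 - (t : ℂ)) ^ (s - 1) * ((p ^ 2 - t : ℝ) : ℂ) ^ (1 / 2 - s) *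
        (Complex.Gamma (s - 1 / 2) * Complex.Gamma (1 / 2) / (2 * Complex.Gamma s)) := by
    intro t ht
    simp only [← Complex.ofReal_sub, add_sub_right_comm]
    rw [integral_const_mul, integral_Ioi_sq_add_cpow hs (by linarith [ht.2]), ← mul_assoc]
  have hπ : (1 / (4 * Real.pi) : ℂ) * Real.pi = 1 / 4 := by
    have : (Real.pi : ℂ) ≠ 0 := by exact_mod_cast Real.pi_ne_zero
    field_simp
  unfold greenH
  rw [integral_const_mul, integral_integral_swap (integrable_greenH_kernel hs hp1),
    setIntegral_congr_fun measurableSet_Ioo hinner, integral_mul_const,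
    integral_Ioo_cpow_mul_sq_sub_cpow hp hq h hs, ← hπ, ← two_mul_sub_one_mul_Gamma_quotients hs]
  ring

lemma integral_greenH_cosh_sq_add_sq {L : ℝ} (hL : L ≠ 0) {s : ℂ} (hs : 1 / 2 < s.re) :
    (2 * s - 1) * ∫ v in Ioi (0 : ℝ), greenH s (Real.cosh (L / 2) ^ 2 + v ^ 2) =
      1 / 4 * Complex.exp ((1 / 2 - s) * |L|) := by
  have hsum : (Real.cosh (|L| / 2) + Real.sinh (|L| / 2)) ^ 2 = Real.exp |L| := by
    rw [Real.cosh_add_sinh, ← Real.exp_nat_mul]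
    ring_nf
  have h := integral_greenH_add_sq (Real.cosh_pos (|L| / 2))
    (Real.sinh_pos_iff.mpr (half_pos (abs_pos.mpr hL))) (by rw [Real.cosh_sq']) hs
  have habs : Real.cosh (|L| / 2) = Real.cosh (L / 2) := by
    rw [← Real.cosh_abs (L / 2), abs_div, abs_two]
  rw [hsum, habs] at h
  rw [h, Complex.ofReal_exp, Complex.cpow_def_of_ne_zero (Complex.exp_ne_zero _),
    ← Complex.ofReal_exp, ← Complex.ofReal_log (Real.exp_pos _).le, Real.log_exp,
    mul_comm (Complex.ofReal _)]

lemma integral_Ioo_one_exp_inv {ℓ : ℝ} (hℓ : 0 ≤ ℓ) : ∫ y in Ioo 1 (Real.exp ℓ), y⁻¹ = ℓ := by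
  rw [← integral_Ioc_eq_integral_Ioo, ← intervalIntegral.integral_of_le (Real.one_le_exp hℓ),
    integral_inv_of_pos one_pos (Real.exp_pos _), div_one, Real.log_exp]

lemma integral_strip_comp_div (f : ℝ → ℂ) {ℓ c : ℝ} (hℓ : 0 ≤ ℓ) (hc : 0 < c) :
    ∫ y in Ioo 1 (Real.exp ℓ), ∫ x in Ioi (0 : ℝ), f (c * x / y) / (y : ℂ) ^ 2 =
      ℓ / c * ∫ v in Ioi (0 : ℝ), f v := by
  have hinner : ∀ y ∈ Ioo 1 (Real.exp ℓ), ∫ x in Ioi (0 : ℝ), f (c * x / y) / (y : ℂ) ^ 2 =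
      (y⁻¹ : ℝ) * ((∫ v in Ioi (0 : ℝ), f v) / c) := by
    intro y hy
    have hy₀ : 0 < y := one_pos.trans hy.1
    have hy' : (y : ℂ) ≠ 0 := by exact_mod_cast hy₀.ne'
    simp only [mul_div_right_comm]
    rw [integral_div, integral_comp_mul_left_Ioi f 0 (div_pos hc hy₀), mul_zero,
      Complex.real_smul]
    push_cast
    field_simp
  rw [setIntegral_congr_fun measurableSet_Ioo hinner, integral_mul_const, integral_complex_ofReal,
    integral_Ioo_one_exp_inv hℓ]
  ring

lemma one_add_exp_sq_div (L : ℝ) :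
    (1 + Real.exp L) ^ 2 / (4 * Real.exp L) = Real.cosh (L / 2) ^ 2 := by
  have hsq : Real.exp L = Real.exp (L / 2) ^ 2 := by rw [← Real.exp_nat_mul]; ring_nf
  rw [hsq, Real.cosh_eq, Real.exp_neg]
  field_simp
  ring

lemma one_sub_mul_exp_sq_div {ε : ℝ} (hε : ε ^ 2 = 1) (L : ℝ) :
    (1 - ε * Real.exp L) ^ 2 / (4 * Real.exp L) =
      (Real.exp (|L| / 2) * (1 - ε * Real.exp (-|L|)) / 2) ^ 2 := by
  have hsq : Real.exp (|L| / 2) ^ 2 = Real.exp |L| := by rw [← Real.exp_nat_mul]; ring_nf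
  rw [div_pow, mul_pow, hsq]
  rcases abs_cases L with ⟨h, -⟩ | ⟨h, -⟩ <;> rw [h, Real.exp_neg]
  · field_simp
    linear_combination 4 * (Real.exp L ^ 2 - 1) * hε
  · field_simp
    ring

lemma image_term_argument_eq {ε : ℝ} (hε : ε ^ 2 = 1) (L x : ℝ) {y : ℝ} (hy : y ≠ 0) :
    ((1 - ε * Real.exp L) ^ 2 * x ^ 2 + (1 + Real.exp L) ^ 2 * y ^ 2) / (4 * Real.exp L * y ^ 2) =
      Real.cosh (L / 2) ^ 2 +
        (Real.exp (|L| / 2) * (1 - ε * Real.exp (-|L|)) / 2 * x / y) ^ 2 := by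
  rw [div_pow, mul_pow, ← one_sub_mul_exp_sq_div hε, ← one_add_exp_sq_div]
  field_simp
  ring

lemma one_sub_mul_exp_neg_abs_pos {L ε : ℝ} (hL : L ≠ 0) (hε : ε = 1 ∨ ε = -1) :
    0 < 1 - ε * Real.exp (-|L|) := by
  have : Real.exp (-|L|) < 1 := Real.exp_lt_one_iff.mpr (neg_lt_zero.mpr (abs_pos.mpr hL))
  rcases hε with rfl | rfl <;> linarith [Real.exp_pos (-|L|)]

theorem funnel_image_term_general {ℓ L ε : ℝ} (hℓ : 0 ≤ ℓ) (hL : L ≠ 0) (hε : ε = 1 ∨ ε = -1)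
    {s : ℂ} (hs : 1 / 2 < s.re) :
    (2 * s - 1) * ∫ y in Ioo (1 : ℝ) (Real.exp ℓ), ∫ x in Ioi (0 : ℝ),
        greenH s (((1 - ε * Real.exp L) ^ 2 * x ^ 2 + (1 + Real.exp L) ^ 2 * y ^ 2) /
          (4 * Real.exp L * y ^ 2)) / (y : ℂ) ^ 2 =
      (ℓ : ℂ) / 2 * Complex.exp (-s * |L|) / (1 - (ε : ℂ) * Complex.exp (-|L|)) := by
  have hden := one_sub_mul_exp_neg_abs_pos hL hε
  have hden' : (1 - (ε : ℂ) * Complex.exp (-|L|)) ≠ 0 := by exact_mod_cast hden.ne'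
  have hexp : Complex.exp ((1 / 2 - s) * |L|) =
      Complex.exp (-s * |L|) * Complex.exp ((|L| : ℝ) / 2) := by
    rw [← Complex.exp_add]
    ring_nf
  set c := Real.exp (|L| / 2) * (1 - ε * Real.exp (-|L|)) / 2 with hc
  calc _ = (2 * s - 1) * ∫ y in Ioo 1 (Real.exp ℓ), ∫ x in Ioi (0 : ℝ),
          greenH s (Real.cosh (L / 2) ^ 2 + (c * x / y) ^ 2) / (y : ℂ) ^ 2 := by
        congr 1
        refine setIntegral_congr_fun measurableSet_Ioo fun y hy ↦ ?_
        simp only [image_term_argument_eq (sq_eq_one_iff.mpr hε) L _ (one_pos.trans hy.1).ne', hc]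
    _ = ℓ / c * (1 / 4 * Complex.exp ((1 / 2 - s) * |L|)) := by
        rw [integral_strip_comp_div (fun v ↦ greenH s (Real.cosh (L / 2) ^ 2 + v ^ 2)) hℓ
          (by positivity), mul_left_comm, integral_greenH_cosh_sq_add_sq hL hs]
    _ = _ := by
        rw [hexp, hc]
        push_cast
        field_simp
        norm_num

/-- A single term in the method-of-images computation for the funnel (from the proof of
Proposition 2.3 of the paper): for `ℓ > 0`, `m ∈ ℤ \ {0}`, `ε = ±1` and `Re s > 1/2`,
`(2s-1) ∫₁^{e^ℓ} ∫₀^∞ g_s(((1-εe^{mℓ})²x² + (1+e^{mℓ})²y²)/(4e^{mℓ}y²)) y⁻² dx dy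
  = (ℓ/2) e^{-s|m|ℓ}/(1 - ε e^{-|m|ℓ})`. -/
theorem funnel_image_term (ℓ : ℝ) (hl : 0 < ℓ) (m : ℤ) (hm : m ≠ 0)
    (ε : ℝ) (hε : ε = 1 ∨ ε = -1) (s : ℂ) (hs : 1 / 2 < s.re) :
    (2 * s - 1) * ∫ y in Set.Ioo (1:ℝ) (Real.exp ℓ), ∫ x in Set.Ioi (0:ℝ),
        greenH s (((1 - ε * Real.exp (m * ℓ)) ^ 2 * x ^ 2
            + (1 + Real.exp (m * ℓ)) ^ 2 * y ^ 2) / (4 * Real.exp (m * ℓ) * y ^ 2))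
          / (y : ℂ) ^ 2 =
      ((ℓ : ℂ) / 2) * Complex.exp (-s * (|m| : ℤ) * ℓ)
        / (1 - (ε : ℂ) * Complex.exp (-((|m| : ℤ) : ℂ) * ℓ)) := by
  have habs : ((|m * ℓ| : ℝ) : ℂ) = (|m| : ℤ) * ℓ := by
    rw [abs_mul, abs_of_pos hl, ← Int.cast_abs, Complex.ofReal_mul, Complex.ofReal_intCast]
  rw [mul_assoc (-s), neg_mul ((|m| : ℤ) : ℂ), ← habs]
  exact funnel_image_term_general hl.le (by positivity) hε hs
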